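/- If a computable sequence of functions f_n : {0,1}^∞ → ℝ converges effectively almost surely (with respect to the uniform Bernoulli measure) to a function f, then there exists a Schnorr test T such that lim_{n→∞} f_n(ω) exists for every infinite sequence ω that passes T. In particular, the limit exists for every Schnorr random sequence. -/

import Mathlib

open MeasureTheory Filter

/-- The cylinder set determined by a finite binary string. -/
def Cyl (x : List Bool) : Set (ℕ → Bool) :=
  {ω | ∀ i : Fin x.length, ω i = x.get i}

/-- The length-`n` prefix of an infinite binary sequence. -/
def Pre (ω : ℕ → Bool) (n : ℕ) : List Bool := (List.range n).map ω

/-- `x` is a prefix of the infinite sequence `ω`. -/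
def PrefixOf (x : List Bool) (ω : ℕ → Bool) : Prop :=
  ∀ i : Fin x.length, ω i = x.get i

/-- `μ` is the uniform Bernoulli measure `B_{1/2}` on Cantor space. -/
def UniformMeasure (μ : Measure (ℕ → Bool)) : Prop :=
  ∀ x : List Bool, μ (Cyl x) = (2 : ENNReal)⁻¹ ^ x.length

/-- A Solovay test: a computable sequence of strings whose weights form a convergent series. -/
def SolovayTest (x : ℕ → List Bool) : Prop :=
  Computable x ∧ Summable (fun n => (2 : ℝ) ^ (-((x n).length : ℤ)))

/-- `ω` passes the Solovay test `x`: only finitely many `x n` are prefixes of `ω`. -/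
def PassesSolovay (x : ℕ → List Bool) (ω : ℕ → Bool) : Prop :=
  {n | PrefixOf (x n) ω}.Finite

/-- A total Solovay test: the series converges with a computable rate of convergence. -/
def TotalSolovayTest (x : ℕ → List Bool) : Prop :=
  SolovayTest x ∧ ∃ m : ℚ → ℕ, Computable m ∧
    ∀ δ : ℚ, 0 < δ → ∑' n : {n : ℕ // m δ ≤ n}, (2 : ℝ) ^ (-((x n.1).length : ℤ)) ≤ (δ : ℝ)

/-- The effectively open set enumerated by the `n`-th row of `f`. -/
def EffOpen (f : ℕ → ℕ → List Bool) (n : ℕ) : Set (ℕ → Bool) := ⋃ i, Cyl (f n i)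

/-- A Martin-Löf test with respect to `μ`. -/
def MLTest (μ : Measure (ℕ → Bool)) (f : ℕ → ℕ → List Bool) : Prop :=
  Computable₂ f ∧ ∀ n, μ (EffOpen f n) ≤ (2 : ENNReal)⁻¹ ^ n

/-- A Schnorr test: a Martin-Löf test whose measures are uniformly computable reals. -/
def SchnorrTest (μ : Measure (ℕ → Bool)) (f : ℕ → ℕ → List Bool) : Prop :=
  MLTest μ f ∧ ∃ g : ℕ → ℚ → ℚ, Computable₂ g ∧
    ∀ (n : ℕ) (ε : ℚ), 0 < ε → |(g n ε : ℝ) - (μ (EffOpen f n)).toReal| ≤ (ε : ℝ)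

/-- Martin-Löf randomness with respect to `μ`. -/
def MLRandom (μ : Measure (ℕ → Bool)) (ω : ℕ → Bool) : Prop :=
  ∀ f, MLTest μ f → ∃ n, ω ∉ EffOpen f n

/-- Schnorr randomness with respect to `μ`. -/
def SchnorrRandom (μ : Measure (ℕ → Bool)) (ω : ℕ → Bool) : Prop :=
  ∀ f, SchnorrTest μ f → ∃ n, ω ∉ EffOpen f n

/-- A monotone machine: a partial computable monotone map on binary strings. -/
def MonotoneMachine (ψ : List Bool →. List Bool) : Prop :=
  Partrec ψ ∧ ∀ p p' y y', y ∈ ψ p → y' ∈ ψ p' → p <+: p' → (y <+: y' ∨ y' <+: y)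

/-- `Km` is the monotone Kolmogorov complexity determined by some optimal monotone machine. -/
def IsKm (Km : List Bool → ℕ) : Prop :=
  ∃ ψ : List Bool →. List Bool, MonotoneMachine ψ ∧
    (∀ x : List Bool, ∃ p y, y ∈ ψ p ∧ x <+: y ∧ p.length = Km x) ∧
    (∀ x p y, y ∈ ψ p → x <+: y → Km x ≤ p.length) ∧
    (∀ ψ' : List Bool →. List Bool, MonotoneMachine ψ' →
      ∃ c : ℕ, ∀ x p y, y ∈ ψ' p → x <+: y → Km x ≤ p.length + c)

/-- A computable real-valued function on Cantor space. -/
def ComputableRealFn (f : (ℕ → Bool) → ℝ) : Prop :=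
  ∃ F : List Bool → ℚ → ℚ, ∃ k : ℚ → ℕ, Computable₂ F ∧ Computable k ∧
    ∀ (ω : ℕ → Bool) (ε : ℚ), 0 < ε → |(F (Pre ω (k ε)) ε : ℝ) - f ω| ≤ (ε : ℝ)

/-- A computable transformation of Cantor space, induced by a monotone machine. -/
def ComputableTrans (T : (ℕ → Bool) → (ℕ → Bool)) : Prop :=
  ∃ ψ : List Bool →. List Bool, MonotoneMachine ψ ∧
    ∀ ω : ℕ → Bool, (∀ n y, y ∈ ψ (Pre ω n) → y = Pre (T ω) y.length) ∧
      (∀ k, ∃ n y, y ∈ ψ (Pre ω n) ∧ k ≤ y.length)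

/-- A computable sequence of real-valued functions on Cantor space. -/
def ComputableRealFnSeq (f : ℕ → (ℕ → Bool) → ℝ) : Prop :=
  ∃ F : ℕ → List Bool → ℚ → ℚ, ∃ k : ℕ → ℚ → ℕ,
    Computable (fun p : ℕ × List Bool × ℚ => F p.1 p.2.1 p.2.2) ∧ Computable₂ k ∧
    ∀ (n : ℕ) (ω : ℕ → Bool) (ε : ℚ), 0 < ε → |(F n (Pre ω (k n ε)) ε : ℝ) - f n ω| ≤ (ε : ℝ)

/-- Effective almost sure convergence of `f n` to `g` with respect to `μ`. -/
def EffConvergesAS (μ : Measure (ℕ → Bool)) (f : ℕ → (ℕ → Bool) → ℝ)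
    (g : (ℕ → Bool) → ℝ) : Prop :=
  ∃ m : ℚ → ℚ → ℕ, Computable₂ m ∧ ∀ δ ε : ℚ, 0 < δ → 0 < ε →
    μ {ω | ∃ n, m δ ε ≤ n ∧ (δ : ℝ) < |f n ω - g ω|} < ENNReal.ofReal (ε : ℝ)

/-! ### Computability helpers -/

def bex (p : ℕ → Bool) (n : ℕ) : Bool :=
  Nat.rec (motive := fun _ => Bool) false (fun m acc => acc || p m) n

theorem bex_iff (p : ℕ → Bool) (n : ℕ) : bex p n = true ↔ ∃ m < n, p m = true := by
  induction n with
  | zero => simp [bex]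
  | succ n ih =>
    have : bex p (n+1) = (bex p n || p n) := rfl
    rw [this, Bool.or_eq_true, ih]
    constructor
    · rintro (⟨m, h, h'⟩ | h)
      · exact ⟨m, by omega, h'⟩
      · exact ⟨n, by omega, h⟩
    · rintro ⟨m, h, h'⟩
      rcases Nat.lt_succ_iff_lt_or_eq.1 h with h | rfl
      · exact Or.inl ⟨m, h, h'⟩
      · exact Or.inr h'

def nsum (p : ℕ → ℕ) (n : ℕ) : ℕ :=
  Nat.rec (motive := fun _ => ℕ) 0 (fun m acc => acc + p m) n

theorem nsum_eq (p : ℕ → ℕ) (n : ℕ) : nsum p n = ∑ i ∈ Finset.range n, p i := by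
  induction n with
  | zero => rfl
  | succ n ih => rw [Finset.sum_range_succ, ← ih]; rfl

theorem le_nsum (p : ℕ → ℕ) {n i : ℕ} (h : i < n) : p i ≤ nsum p n := by
  rw [nsum_eq]
  exact Finset.single_le_sum (f := p) (fun _ _ => Nat.zero_le _) (Finset.mem_range.2 h)

section comp
variable {α β : Type*} [Primcodable α] [Primcodable β]

theorem bex_computable {p : α → ℕ → Bool} {N : α → ℕ} (hp : Computable₂ p) (hN : Computable N) :
    Computable fun a => bex (p a) (N a) := by
  refine Computable.nat_rec (h := fun a (x : ℕ × Bool) => x.2 || p a x.1) hN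
    (Computable.const false) ?_
  exact Primrec.or.to_comp.comp (Computable.snd.comp Computable.snd)
    (hp.comp Computable.fst (Computable.fst.comp Computable.snd))

theorem nsum_computable {p : α → ℕ → ℕ} {N : α → ℕ} (hp : Computable₂ p) (hN : Computable N) :
    Computable fun a => nsum (p a) (N a) := by
  refine Computable.nat_rec (h := fun a (x : ℕ × ℕ) => x.2 + p a x.1) hN
    (Computable.const 0) ?_
  exact Primrec.nat_add.to_comp.comp (Computable.snd.comp Computable.snd)
    (hp.comp Computable.fst (Computable.fst.comp Computable.snd))

theorem find_computable {p : α → ℕ → Bool} (hp : Computable₂ p) (h : ∀ a, ∃ n, p a n = true) :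
    Computable fun a => Nat.find (h a) := by
  have h1 : Partrec fun a => Nat.rfind (fun n => (Part.some (p a n) : Part Bool)) :=
    Partrec.rfind (p := fun a n => Part.some (p a n)) hp
  refine h1.of_eq fun a => ?_
  refine Part.eq_some_iff.2 (Nat.mem_rfind.2 ⟨?_, ?_⟩)
  · rw [Part.mem_some_iff]; exact (Nat.find_spec (h a)).symm
  · intro m hm
    rw [Part.mem_some_iff]
    have := Nat.find_min (h a) hm
    revert this
    cases p a m <;> simp

end comp

theorem pow_primrec : Primrec₂ ((· ^ ·) : ℕ → ℕ → ℕ) := Primrec₂.unpaired'.1 Nat.Primrec.pow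

/-! ### Rationals -/

def RS : Set ℕ := Set.range (@Encodable.encode ℚ Rat.instEncodable)

theorem encode0 (q : ℚ) : @Encodable.encode ℚ Rat.instEncodable q =
    Nat.pair (Equiv.intEquivNat q.num) q.den := by
  rfl

def RE (q : ℚ) : ℕ := Nat.pair (Equiv.intEquivNat q.num) q.den

theorem RE_ofNat (n : ℕ) 
   [i1 : DecidablePred fun x ↦ x ∈ (Set.range (@Encodable.encode ℚ Rat.instEncodable))] [i2 : Infinite (Set.range (@Encodable.encode ℚ Rat.instEncodable))] : RE (Denumerable.ofNat ℚ n) = 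
   (Nat.Subtype.ofNat (Set.range (@Encodable.encode ℚ Rat.instEncodable)) n : ℕ) := by
  obtain rfl : i1 = @Encodable.decidableRangeEncode ℚ Rat.instEncodable := Subsingleton.elim _ _
  have : ∀ x : Set.range (@Encodable.encode ℚ Rat.instEncodable), @Encodable.encode ℚ Rat.instEncodable ((@Encodable.equivRangeEncode ℚ Rat.instEncodable).symm x) = x := by
    intro x
    exact congrArg Subtype.val ((@Encodable.equivRangeEncode ℚ Rat.instEncodable).apply_symm_apply x)
  exact this _

theorem int_code (z : ℤ) : Equiv.intEquivNat z = if 0 ≤ z then 2 * z.toNat else 2 * (-z).toNat - 1 := by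
  cases z with
  | ofNat a =>
    have h1 : Equiv.intEquivNat (Int.ofNat a) = 2 * a := rfl
    rw [h1, if_pos (show 0 ≤ Int.ofNat a from Int.natCast_nonneg a)]; rfl
  | negSucc a =>
    have h1 : Equiv.intEquivNat (Int.negSucc a) = 2 * a + 1 := by
      simp [Equiv.intEquivNat, Equiv.intEquivNatSumNat]
    have h2 : (-(Int.negSucc a)).toNat = a + 1 := by simp [Int.neg_negSucc]
    have h3 : ¬ (0 ≤ Int.negSucc a) := by omega
    rw [h1, if_neg h3, h2]; omega

theorem int_code_natAbs (z : ℤ) : (Equiv.intEquivNat z + 1) / 2 = z.natAbs := by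
  rw [int_code]; split_ifs <;> omega

def inRS (n : ℕ) : Bool :=
  decide (0 < n.unpair.2) &&
    decide (∀ x < n.unpair.2 + 1, x = 1 ∨ ¬ (((n.unpair.1 + 1) / 2) % x = 0 ∧ n.unpair.2 % x = 0))

theorem inRS_iff (n : ℕ) : inRS n = true ↔ n ∈ RS := by
  obtain ⟨⟨c, b⟩, rfl⟩ : ∃ p : ℕ × ℕ, n = Nat.pair p.1 p.2 := ⟨n.unpair, by simp⟩
  obtain ⟨z, rfl⟩ := Equiv.intEquivNat.surjective c
  simp only [inRS, Nat.unpair_pair, int_code_natAbs, Bool.and_eq_true, decide_eq_true_eq]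
  constructor
  · rintro ⟨hb, h⟩
    refine ⟨⟨z, b, hb.ne', ?_⟩, rfl⟩
    have := h (Nat.gcd z.natAbs b) (Nat.lt_succ_of_le (Nat.gcd_le_right _ hb))
    rcases this with h | h
    · exact h
    · exact absurd ⟨Nat.mod_eq_zero_of_dvd (Nat.gcd_dvd_left _ _),
        Nat.mod_eq_zero_of_dvd (Nat.gcd_dvd_right _ _)⟩ h
  · rintro ⟨q, hq⟩
    rw [encode0] at hq
    obtain ⟨h1, h2⟩ := Nat.pair_eq_pair.1 hq
    have h1 := Equiv.intEquivNat.injective h1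
    subst h1 h2
    refine ⟨q.den_pos, fun x _ => ?_⟩
    by_cases hx : x = 1
    · exact Or.inl hx
    · refine Or.inr fun ⟨ha, hb⟩ => hx ?_
      exact Nat.eq_one_of_dvd_coprimes q.reduced (Nat.dvd_of_mod_eq_zero ha) (Nat.dvd_of_mod_eq_zero hb)

theorem inRS_computable : Computable inRS := by
  have hR : PrimrecRel (fun (x : ℕ) (n : ℕ) =>
      x = 1 ∨ ¬ (((n.unpair.1 + 1) / 2) % x = 0 ∧ n.unpair.2 % x = 0)) := by
    have e1 : Primrec fun p : ℕ × ℕ => ((p.2.unpair.1 + 1) / 2) % p.1 :=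
      Primrec.nat_mod.comp (Primrec.nat_div.comp (Primrec.succ.comp
        (Primrec.fst.comp (Primrec.unpair.comp Primrec.snd))) (Primrec.const 2)) Primrec.fst
    have e2 : Primrec fun p : ℕ × ℕ => p.2.unpair.2 % p.1 :=
      Primrec.nat_mod.comp (Primrec.snd.comp (Primrec.unpair.comp Primrec.snd)) Primrec.fst
    exact PrimrecPred.or (Primrec.eq.comp Primrec.fst (Primrec.const 1))
      (PrimrecPred.not (PrimrecPred.and (Primrec.eq.comp e1 (Primrec.const 0))
        (Primrec.eq.comp e2 (Primrec.const 0))))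
  have h2 := (PrimrecRel.forall_lt hR)
  have h3 : PrimrecPred (fun n : ℕ => ∀ x < n.unpair.2 + 1,
      x = 1 ∨ ¬ (((n.unpair.1 + 1) / 2) % x = 0 ∧ n.unpair.2 % x = 0)) :=
    PrimrecRel.comp h2 (Primrec.succ.comp (Primrec.snd.comp Primrec.unpair)) Primrec.id
  have h4 : PrimrecPred (fun n : ℕ => 0 < n.unpair.2) :=
    Primrec.nat_lt.comp (Primrec.const 0) (Primrec.snd.comp Primrec.unpair)
  exact (Primrec.and.comp h4.decide h3.decide).to_comp

theorem RS_infinite : Infinite (Set.range (@Encodable.encode ℚ Rat.instEncodable)) :=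
  Infinite.of_injective _
    (Equiv.ofInjective _ (@Encodable.encode_injective ℚ Rat.instEncodable)).injective

theorem nx_ex (x : ℕ) : ∃ m, inRS (x + m) = true := by
  have := RS_infinite
  obtain ⟨y, hy, hxy⟩ := (Set.infinite_coe_iff.1 this).exists_gt x
  exact ⟨y - x, by rw [inRS_iff]; rwa [Nat.add_sub_cancel' hxy.le]⟩

def nx (x : ℕ) : ℕ := x + Nat.find (nx_ex x)

theorem nx_computable : Computable nx := by
  refine Primrec.nat_add.to_comp.comp Computable.id (find_computable (p := fun x m => inRS (x + m)) ?_ nx_ex)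
  exact inRS_computable.comp Primrec.nat_add.to_comp

theorem nx_eq {x y : ℕ} (hy : y ∈ RS) (hxy : x ≤ y) (hmin : ∀ z ∈ RS, x ≤ z → y ≤ z) : nx x = y := by
  have h1 : nx x ∈ RS := (inRS_iff _).1 (Nat.find_spec (nx_ex x))
  refine le_antisymm ?_ (hmin _ h1 (Nat.le_add_right _ _))
  have : Nat.find (nx_ex x) ≤ y - x :=
    Nat.find_min' _ (by rw [inRS_iff]; rwa [Nat.add_sub_cancel' hxy])
  unfold nx; omega

theorem RE_rec (n : ℕ) : RE (Denumerable.ofNat ℚ n) =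
    Nat.rec (motive := fun _ => ℕ) (nx 0) (fun _ acc => nx (acc + 1)) n := by
  let _ := @Encodable.decidableRangeEncode ℚ Rat.instEncodable
  have := RS_infinite
  induction n with
  | zero =>
    rw [RE_ofNat]
    refine (nx_eq (y := ((Nat.Subtype.ofNat (Set.range (@Encodable.encode ℚ Rat.instEncodable)) 0) : ℕ)) (Subtype.property _) (Nat.zero_le _) ?_).symm
    intro z hz _
    exact (bot_le : (⊥ : Set.range (@Encodable.encode ℚ Rat.instEncodable)) ≤ ⟨z, hz⟩)
  | succ n ih =>
    rw [RE_ofNat] at ih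
    rw [RE_ofNat]
    change _ = nx (Nat.rec (motive := fun _ => ℕ) (nx 0) (fun _ acc => nx (acc + 1)) n + 1)
    rw [← ih]
    refine (nx_eq (y := ((Nat.Subtype.ofNat (Set.range (@Encodable.encode ℚ Rat.instEncodable)) (n+1)) : ℕ)) (Subtype.property _) (Nat.Subtype.lt_succ_self (Nat.Subtype.ofNat (Set.range (@Encodable.encode ℚ Rat.instEncodable)) n)) ?_).symm
    intro z hz h
    exact Nat.Subtype.succ_le_of_lt (s := Set.range (@Encodable.encode ℚ Rat.instEncodable)) (x := ⟨z, hz⟩) h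

theorem RE_computable : Computable RE := by
  have h : Computable fun n => RE (Denumerable.ofNat ℚ n) := by
    refine (Computable.nat_rec (h := fun (_ : ℕ) (x : ℕ × ℕ) => nx (x.2 + 1)) Computable.id
      (Computable.const (nx 0)) ?_).of_eq fun n => (RE_rec n).symm
    exact nx_computable.comp (Computable.succ.comp (Computable.snd.comp Computable.snd))
  refine (h.comp (Computable.encode (α := ℚ))).of_eq fun q => ?_
  rw [Denumerable.ofNat_encode]

theorem den_computable : Computable (fun q : ℚ => q.den) :=
  ((Primrec.snd.comp Primrec.unpair).to_comp.comp RE_computable).of_eq fun q => by simp [RE]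

theorem numcode_computable : Computable (fun q : ℚ => Equiv.intEquivNat q.num) :=
  ((Primrec.fst.comp Primrec.unpair).to_comp.comp RE_computable).of_eq fun q => by simp [RE]

theorem pos_computable : Computable (fun q : ℚ => q.num.toNat) := by
  have h : Primrec fun c : ℕ => if c % 2 = 0 then c / 2 else 0 :=
    Primrec.ite (Primrec.eq.comp (Primrec.nat_mod.comp Primrec.id (Primrec.const 2))
      (Primrec.const 0)) (Primrec.nat_div.comp Primrec.id (Primrec.const 2)) (Primrec.const 0)
  refine (h.to_comp.comp numcode_computable).of_eq fun q => ?_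
  simp only [int_code]
  split_ifs <;> omega

theorem neg_computable : Computable (fun q : ℚ => (-q.num).toNat) := by
  have h : Primrec fun c : ℕ => if c % 2 = 0 then 0 else c / 2 + 1 :=
    Primrec.ite (Primrec.eq.comp (Primrec.nat_mod.comp Primrec.id (Primrec.const 2))
      (Primrec.const 0)) (Primrec.const 0)
      (Primrec.succ.comp (Primrec.nat_div.comp Primrec.id (Primrec.const 2)))
  refine (h.to_comp.comp numcode_computable).of_eq fun q => ?_
  simp only [int_code]
  split_ifs <;> omega

def dyad (c M : ℕ) : ℚ := (c : ℚ) / 2 ^ M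

theorem eq_dyad_iff (q : ℚ) (c M : ℕ) :
    (q.num.toNat * 2 ^ M = c * q.den ∧ (-q.num).toNat = 0) ↔ q = dyad c M := by
  have hq : q = (q.num : ℚ) / (q.den : ℚ) := (Rat.num_div_den q).symm
  have hd : (q.den : ℚ) ≠ 0 := by exact_mod_cast q.den_nz
  have key : (q = dyad c M) ↔ q.num * 2 ^ M = (c : ℤ) * q.den := by
    rw [dyad]
    nth_rewrite 1 [hq]
    rw [div_eq_div_iff hd (by positivity)]
    exact_mod_cast Iff.rfl
  rw [key]
  constructor
  · rintro ⟨h1, h2⟩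
    have h3 : q.num = (q.num.toNat : ℤ) := by omega
    rw [h3]; exact_mod_cast h1
  · intro h
    have h0 : 0 ≤ q.num := by
      by_contra hneg
      have : q.num * 2 ^ M < 0 := mul_neg_of_neg_of_pos (by omega) (by positivity)
      have : (0:ℤ) ≤ (c : ℤ) * q.den := by positivity
      omega
    have h3 : q.num = (q.num.toNat : ℤ) := by omega
    rw [h3] at h
    exact ⟨by exact_mod_cast h, by omega⟩

theorem dyad_computable : Computable₂ dyad := by
  let p : ℕ × ℕ → ℕ → Bool := fun a n =>
    (((Denumerable.ofNat ℚ n).num.toNat * 2 ^ a.2) == (a.1 * (Denumerable.ofNat ℚ n).den)) &&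
      ((-(Denumerable.ofNat ℚ n).num).toNat == 0)
  have hp : ∀ a n, p a n = true ↔ Denumerable.ofNat ℚ n = dyad a.1 a.2 := by
    intro a n
    rw [← eq_dyad_iff]; simp [p]
  have hpc : Computable₂ p := by
    have ho : Computable fun x : (ℕ × ℕ) × ℕ => Denumerable.ofNat ℚ x.2 :=
      (Primrec.ofNat ℚ).to_comp.comp Computable.snd
    have ha : Computable fun x : (ℕ × ℕ) × ℕ => x.1.1 := Computable.fst.comp Computable.fst
    have hb : Computable fun x : (ℕ × ℕ) × ℕ => x.1.2 := Computable.snd.comp Computable.fst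
    exact Primrec.and.to_comp.comp
      (Primrec.beq.to_comp.comp
        (Primrec.nat_mul.to_comp.comp (pos_computable.comp ho)
          (pow_primrec.to_comp.comp (Computable.const 2) hb))
        (Primrec.nat_mul.to_comp.comp ha (den_computable.comp ho)))
      (Primrec.beq.to_comp.comp (neg_computable.comp ho) (Computable.const 0))
  have hex : ∀ a, ∃ n, p a n = true := fun a =>
    ⟨@Encodable.encode ℚ Denumerable.toEncodable (dyad a.1 a.2), by rw [hp, Denumerable.ofNat_encode]⟩
  have := (Primrec.ofNat ℚ).to_comp.comp (find_computable hpc hex)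
  exact this.of_eq fun a => (hp a _).1 (Nat.find_spec (hex a))

/-- decides `4 / 2 ^ j < |a - b|` -/
def far (j : ℕ) (a b : ℚ) : Bool :=
  decide (4 * (a.den * b.den) <
      2 ^ j * ((a.num.toNat * b.den + (-b.num).toNat * a.den) -
        ((-a.num).toNat * b.den + b.num.toNat * a.den))) ||
  decide (4 * (a.den * b.den) <
      2 ^ j * (((-a.num).toNat * b.den + b.num.toNat * a.den) -
        (a.num.toNat * b.den + (-b.num).toNat * a.den)))

theorem far_computable : Computable fun x : ℕ × ℚ × ℚ => far x.1 x.2.1 x.2.2 := by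
  have hj : Computable fun x : ℕ × ℚ × ℚ => x.1 := Computable.fst
  have ha : Computable fun x : ℕ × ℚ × ℚ => x.2.1 := Computable.fst.comp Computable.snd
  have hb : Computable fun x : ℕ × ℚ × ℚ => x.2.2 := Computable.snd.comp Computable.snd
  have mul := Primrec.nat_mul.to_comp
  have add := Primrec.nat_add.to_comp
  have sub := Primrec.nat_sub.to_comp
  have lt : Computable₂ fun x y : ℕ => decide (x < y) := Primrec.nat_lt.decide.to_comp
  have da := den_computable.comp ha
  have db := den_computable.comp hb
  have X := add.comp (mul.comp (pos_computable.comp ha) db) (mul.comp (neg_computable.comp hb) da)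
  have Y := add.comp (mul.comp (neg_computable.comp ha) db) (mul.comp (pos_computable.comp hb) da)
  have P := pow_primrec.to_comp.comp (Computable.const 2) hj
  have D := mul.comp (Computable.const 4) (mul.comp da db)
  exact Primrec.or.to_comp.comp (lt.comp D (mul.comp P (sub.comp X Y)))
    (lt.comp D (mul.comp P (sub.comp Y X)))

theorem far_iff (j : ℕ) (a b : ℚ) : far j a b = true ↔ 4 / 2 ^ j < |a - b| := by
  have hda : (0 : ℚ) < a.den := by exact_mod_cast a.den_pos
  have hdb : (0 : ℚ) < b.den := by exact_mod_cast b.den_pos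
  have ea : a * a.den = ((a.num.toNat : ℕ) : ℚ) - (((-a.num).toNat : ℕ) : ℚ) := by
    rw [Rat.mul_den_eq_num]
    have : a.num = (a.num.toNat : ℤ) - ((-a.num).toNat : ℤ) := by omega
    exact_mod_cast congrArg (Int.cast : ℤ → ℚ) this
  have eb : b * b.den = ((b.num.toNat : ℕ) : ℚ) - (((-b.num).toNat : ℕ) : ℚ) := by
    rw [Rat.mul_den_eq_num]
    have : b.num = (b.num.toNat : ℤ) - ((-b.num).toNat : ℤ) := by omega
    exact_mod_cast congrArg (Int.cast : ℤ → ℚ) this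
  have key : ∀ D P X Y : ℕ, D < P * (X - Y) ↔ (D : ℚ) < P * ((X : ℚ) - Y) := by
    intro D P X Y
    rcases le_total Y X with h | h
    · rw [← Nat.cast_sub h]; exact_mod_cast Iff.rfl
    · rw [Nat.sub_eq_zero_of_le h]
      simp only [mul_zero, not_lt_zero, false_iff, not_lt]
      have : (P : ℚ) * ((X : ℚ) - Y) ≤ 0 :=
        mul_nonpos_of_nonneg_of_nonpos (by positivity) (by
          have : (X : ℚ) ≤ Y := by exact_mod_cast h
          linarith)
      exact this.trans (by positivity)
  simp only [far, Bool.or_eq_true, decide_eq_true_eq, key, lt_abs]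
  have hdd : (0 : ℚ) < a.den * b.den := by positivity
  push_cast
  have h2 : (0 : ℚ) < 2 ^ j := by positivity
  refine or_congr ?_ ?_
  · rw [div_lt_iff₀ h2, ← mul_lt_mul_iff_left₀ (b := 4) hdd]
    have : (a - b) * 2 ^ j * (a.den * b.den) = 2 ^ j * ((a * a.den) * b.den - (b * b.den) * a.den) := by ring
    rw [this, ea, eb]
    ring_nf
  · rw [div_lt_iff₀ h2, ← mul_lt_mul_iff_left₀ (b := 4) hdd]
    have : (-(a - b)) * 2 ^ j * (a.den * b.den) = 2 ^ j * ((b * b.den) * a.den - (a * a.den) * b.den) := by ring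
    rw [this, ea, eb]
    ring_nf
/-! ### Strings and cylinders -/

theorem Pre_length (ω : ℕ → Bool) (n : ℕ) : (Pre ω n).length = n := by simp [Pre]

theorem Pre_take (ω : ℕ → Bool) {n m : ℕ} (h : n ≤ m) : (Pre ω m).take n = Pre ω n := by
  simp [Pre, ← List.map_take, List.take_range, Nat.min_eq_left h]

theorem mem_Cyl_iff (x : List Bool) (ω : ℕ → Bool) : ω ∈ Cyl x ↔ Pre ω x.length = x := by
  constructor
  · intro h
    refine List.ext_get (Pre_length _ _) fun i h1 h2 => ?_
    have := h ⟨i, h2⟩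
    simpa [Pre] using this
  · intro h i
    have h2 : ∀ j : ℕ, j < x.length → (Pre ω x.length)[j]? = some (ω j) := by
      intro j hj; simp [Pre, hj]
    have h3 := h2 i i.2
    rw [h] at h3
    simpa using h3.symm

theorem Cyl_measurable (x : List Bool) : MeasurableSet (Cyl x) := by
  have : Cyl x = ⋂ i : Fin x.length, (fun ω : ℕ → Bool => ω i) ⁻¹' {x.get i} := by
    ext ω; simp [Cyl]
  rw [this]
  exact MeasurableSet.iInter fun i => measurable_pi_apply _ (measurableSet_singleton _)

def str (M s : ℕ) : List Bool := (List.range M).map fun i => s.testBit i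

theorem str_length (M s : ℕ) : (str M s).length = M := by simp [str]

theorem str_computable : Computable₂ str := by
  have h : Primrec₂ fun (a : ℕ × ℕ) (i : ℕ) => a.2.testBit i := by
    have : Primrec fun x : (ℕ × ℕ) × ℕ => (x.1.2 / 2 ^ x.2 % 2) == 1 :=
      Primrec.beq.comp (Primrec.nat_mod.comp (Primrec.nat_div.comp
        (Primrec.snd.comp Primrec.fst) (pow_primrec.comp (Primrec.const 2) Primrec.snd))
        (Primrec.const 2)) (Primrec.const 1)
    refine this.of_eq fun x => ?_
    exact (Nat.testBit_eq_decide_div_mod_eq (x := x.1.2) (i := x.2)).symm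
  exact (Primrec.list_map (Primrec.list_range.comp Primrec.fst) h).to_comp

theorem exists_str (ω : ℕ → Bool) (M : ℕ) : ∃ s < 2 ^ M, str M s = Pre ω M := by
  refine ⟨Nat.ofBits (fun i : Fin M => ω i), Nat.ofBits_lt_two_pow _, ?_⟩
  refine List.map_congr_left fun i hi => ?_
  have hi := List.mem_range.1 hi
  rw [Nat.testBit_ofBits_lt _ _ hi]

theorem str_inj {M s s' : ℕ} (hs : s < 2 ^ M) (hs' : s' < 2 ^ M) (h : str M s = str M s') :
    s = s' := by
  refine Nat.eq_of_testBit_eq fun i => ?_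
  by_cases hi : i < M
  · exact List.map_inj_left.1 h i (List.mem_range.2 hi)
  · have h2 : 2 ^ M ≤ 2 ^ i := Nat.pow_le_pow_right (by norm_num) (by omega)
    rw [Nat.testBit_lt_two_pow (hs.trans_le h2), Nat.testBit_lt_two_pow (hs'.trans_le h2)]

def cnt (R : List Bool → Bool) (M : ℕ) : ℕ := nsum (fun s => (R (str M s)).toNat) (2 ^ M)

theorem measure_cnt (μ : Measure (ℕ → Bool)) (hμ : UniformMeasure μ) (R : List Bool → Bool)
    (M : ℕ) : (μ {ω | R (Pre ω M) = true}).toReal = (dyad (cnt R M) M : ℝ) := by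
  classical
  have hset : {ω | R (Pre ω M) = true} =
      ⋃ s ∈ (Finset.range (2 ^ M)).filter (fun s => R (str M s) = true), Cyl (str M s) := by
    ext ω
    simp only [Set.mem_ofPred_eq, Set.mem_iUnion, Finset.mem_filter, Finset.mem_range,
      mem_Cyl_iff, str_length]
    constructor
    · intro h
      obtain ⟨s, hs, h2⟩ := exists_str ω M
      exact ⟨s, ⟨hs, by rwa [h2]⟩, h2.symm⟩
    · rintro ⟨s, ⟨hs, h⟩, h2⟩
      rwa [h2]
  rw [hset, measure_biUnion_finset]
  · simp only [hμ _, str_length]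
    rw [Finset.sum_const, Finset.card_filter]
    have : cnt R M = ∑ i ∈ Finset.range (2 ^ M), if R (str M i) = true then 1 else 0 := by
      rw [cnt, nsum_eq]
      refine Finset.sum_congr rfl fun s _ => ?_
      cases R (str M s) <;> rfl
    rw [← this]
    simp [dyad, div_eq_mul_inv]
  · intro s hs s' hs' hne
    rw [Function.onFun, Set.disjoint_left]
    intro ω h h'
    rw [mem_Cyl_iff, str_length] at h h'
    simp only [Finset.coe_filter, Finset.mem_range, Set.mem_ofPred_eq] at hs hs'
    exact hne (str_inj hs.1 hs'.1 (h.symm.trans h'))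
  · exact fun s _ => Cyl_measurable _

theorem tail_bound (μ : Measure (ℕ → Bool)) (D : ℕ → Set (ℕ → Bool))
    (hD : ∀ j, μ (D j) ≤ (2 : ENNReal)⁻¹ ^ j) (J : ℕ) :
    μ {ω | ∃ j, J ≤ j ∧ ω ∈ D j} ≤ 2 * (2 : ENNReal)⁻¹ ^ J := by
  have h1 : {ω | ∃ j, J ≤ j ∧ ω ∈ D j} ⊆ ⋃ i, D (i + J) := by
    rintro ω ⟨j, hj, h⟩
    exact Set.mem_iUnion.2 ⟨j - J, by rwa [Nat.sub_add_cancel hj]⟩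
  refine (measure_mono h1).trans ((measure_iUnion_le _).trans ?_)
  refine (ENNReal.tsum_le_tsum fun i => hD (i + J)).trans ?_
  simp only [pow_add]
  rw [ENNReal.tsum_mul_right, ENNReal.tsum_geometric]
  simp

def filler (i : ℕ) : List Bool := (List.range (i + 2)).map fun _ => false

theorem filler_length (i : ℕ) : (filler i).length = i + 2 := by simp [filler]

theorem filler_computable : Computable filler :=
  (Primrec.list_map (Primrec.list_range.comp (Primrec.succ.comp Primrec.succ))
    (Primrec₂.const false)).to_comp

def tst (L : ℕ → ℕ) (Q : ℕ → List Bool → Bool) (i s : ℕ) : List Bool :=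
  bif decide (i + 2 ≤ s.unpair.1) && Q s.unpair.1 (str (L s.unpair.1) s.unpair.2)
  then str (L s.unpair.1) s.unpair.2 else filler i

theorem tst_open (L : ℕ → ℕ) (Q : ℕ → List Bool → Bool) (i : ℕ) :
    EffOpen (tst L Q) i = Cyl (filler i) ∪ {ω | ∃ j, i + 2 ≤ j ∧ Q j (Pre ω (L j)) = true} := by
  have main : ∀ j b, tst L Q i (Nat.pair j b) =
      bif decide (i + 2 ≤ j) && Q j (str (L j) b) then str (L j) b else filler i := by
    intro j b
    simp only [tst, Nat.unpair_pair]
  ext ω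
  simp only [EffOpen, Set.mem_iUnion, Set.mem_union, Set.mem_ofPred_eq]
  constructor
  · rintro ⟨s, hs⟩
    obtain ⟨⟨j, b⟩, rfl⟩ : ∃ p : ℕ × ℕ, s = Nat.pair p.1 p.2 := ⟨s.unpair, by simp⟩
    rw [main] at hs
    cases hc : (decide (i + 2 ≤ j) && Q j (str (L j) b)) with
    | false => rw [hc] at hs; exact Or.inl hs
    | true =>
      rw [hc, cond_true, mem_Cyl_iff, str_length] at hs
      simp only [Bool.and_eq_true, decide_eq_true_eq] at hc
      refine Or.inr ⟨j, hc.1, ?_⟩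
      rw [hs]; exact hc.2
  · rintro (h | ⟨j, hj, h⟩)
    · refine ⟨Nat.pair 0 0, ?_⟩
      rw [main]
      simpa using h
    · obtain ⟨b, _, hb⟩ := exists_str ω (L j)
      refine ⟨Nat.pair j b, ?_⟩
      rw [main, hb]
      simp [hj, h, Pre_length, mem_Cyl_iff]

theorem tst_computable {L : ℕ → ℕ} {Q : ℕ → List Bool → Bool} (hL : Computable L)
    (hQ : Computable₂ Q) : Computable₂ (tst L Q) := by
  have ho : Computable fun x : ℕ × ℕ => Nat.unpair x.2 := Computable.unpair.comp Computable.snd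
  have h1 := Computable.fst.comp ho
  have h2 := str_computable.comp (hL.comp h1) (Computable.snd.comp ho)
  have le : Computable₂ fun x y : ℕ => decide (x ≤ y) := Primrec.nat_le.decide.to_comp
  exact Computable.cond (Primrec.and.to_comp.comp
    (le.comp (Computable.succ.comp (Computable.succ.comp Computable.fst)) h1)
    (hQ.comp h1 h2)) h2 (filler_computable.comp Computable.fst)

/-- finite approximation predicate -/
def apx (L : ℕ → ℕ) (Q : ℕ → List Bool → Bool) (i J : ℕ) (x : List Bool) : Bool :=
  decide (x.take (i + 2) = filler i) || bex (fun j => decide (i + 2 ≤ j) && Q j (x.take (L j))) J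

def lev (L : ℕ → ℕ) (i J : ℕ) : ℕ := (i + 2) + nsum L J

theorem apx_set (L : ℕ → ℕ) (Q : ℕ → List Bool → Bool) (i J : ℕ) :
    {ω | apx L Q i J (Pre ω (lev L i J)) = true} =
      Cyl (filler i) ∪ {ω | ∃ j < J, i + 2 ≤ j ∧ Q j (Pre ω (L j)) = true} := by
  ext ω
  simp only [apx, Set.mem_ofPred_eq, Set.mem_union, Bool.or_eq_true, bex_iff,
    mem_Cyl_iff, filler_length, Bool.and_eq_true, decide_eq_true_eq]
  rw [Pre_take ω (by unfold lev; omega)]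
  refine or_congr Iff.rfl (exists_congr fun j => and_congr_right fun hj => ?_)
  have := le_nsum L hj
  rw [Pre_take ω (by unfold lev; omega)]

def gapx0 (L : ℕ → ℕ) (Q : ℕ → List Bool → Bool) (p : ℕ × ℕ) : ℚ :=
  dyad (cnt (apx L Q p.1 p.2) (lev L p.1 p.2)) (lev L p.1 p.2)

def gapx (L : ℕ → ℕ) (Q : ℕ → List Bool → Bool) (i : ℕ) (ε : ℚ) : ℚ := gapx0 L Q (i, ε.den + 1)

theorem pow2_computable : Computable fun n : ℕ => 2 ^ n :=
  (pow_primrec.comp (Primrec.const 2) Primrec.id).to_comp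

theorem toNat_computable : Computable Bool.toNat := (Primrec.dom_bool Bool.toNat).to_comp

theorem lev_computable {L : ℕ → ℕ} (hL : Computable L) :
    Computable fun p : ℕ × ℕ => lev L p.1 p.2 :=
  Primrec.nat_add.to_comp.comp (Computable.succ.comp (Computable.succ.comp Computable.fst))
      (nsum_computable (p := fun _ n => L n) (hL.comp Computable.snd) Computable.snd)

theorem apx_computable {L : ℕ → ℕ} {Q : ℕ → List Bool → Bool} (hL : Computable L)
    (hQ : Computable₂ Q) :
    Computable fun p : (ℕ × ℕ) × List Bool => apx L Q p.1.1 p.1.2 p.2 := by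
  have hi : Computable fun p : (ℕ × ℕ) × List Bool => p.1.1 := Computable.fst.comp Computable.fst
  have hi2 : Computable fun p : (ℕ × ℕ) × List Bool => p.1.1 + 2 :=
    Computable.succ.comp (Computable.succ.comp hi)
  have le : Computable₂ fun x y : ℕ => decide (x ≤ y) := Primrec.nat_le.decide.to_comp
  have eq : Computable₂ fun x y : List Bool => decide (x = y) := Primrec.eq.decide.to_comp
  have take : Computable₂ (List.take : ℕ → List Bool → List Bool) := Primrec.list_take.to_comp
  have hb : Computable₂ fun (p : (ℕ × ℕ) × List Bool) (j : ℕ) =>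
      decide (p.1.1 + 2 ≤ j) && Q j (p.2.take (L j)) :=
    Primrec.and.to_comp.comp
      (le.comp (hi2.comp Computable.fst) Computable.snd)
      (hQ.comp Computable.snd (take.comp (hL.comp Computable.snd)
        (Computable.snd.comp Computable.fst)))
  have h1 : Computable fun p : (ℕ × ℕ) × List Bool => decide (p.2.take (p.1.1 + 2) = filler p.1.1) :=
    eq.comp (take.comp hi2 Computable.snd) (filler_computable.comp hi)
  have h2 := bex_computable hb (Computable.snd.comp Computable.fst)
  exact Primrec.or.to_comp.comp h1 h2

theorem comp_of {α β γ : Type*} [Primcodable α] [Primcodable β] [Primcodable γ]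
    {A : α → β} {B : γ → α} {C : γ → β} (hA : Computable A) (hB : Computable B)
    (h : ∀ y, A (B y) = C y) : Computable C :=
  (hA.comp hB).of_eq h

theorem cnt_computable {L : ℕ → ℕ} {Q : ℕ → List Bool → Bool} (hL : Computable L)
    (hQ : Computable₂ Q) :
    Computable fun p : ℕ × ℕ => cnt (apx L Q p.1 p.2) (lev L p.1 p.2) := by
  have hx : Computable fun y : (ℕ × ℕ) × ℕ => str (lev L y.1.1 y.1.2) y.2 :=
    str_computable.comp ((lev_computable hL).comp Computable.fst) Computable.snd
  have h1 : Computable fun y : (ℕ × ℕ) × ℕ =>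
      apx L Q y.1.1 y.1.2 (str (lev L y.1.1 y.1.2) y.2) := by
    have hB := Computable.pair (Computable.fst (α := ℕ × ℕ) (β := ℕ)) hx
    have hA := apx_computable hL hQ
    exact comp_of hA hB fun y => rfl
  have h2 : Computable₂ fun (p : ℕ × ℕ) (s : ℕ) =>
      (apx L Q p.1 p.2 (str (lev L p.1 p.2) s)).toNat :=
    toNat_computable.comp h1
  have h3 : Computable fun p : ℕ × ℕ => 2 ^ lev L p.1 p.2 :=
    pow2_computable.comp (lev_computable hL)
  have h4 := nsum_computable h2 h3
  unfold cnt
  exact h4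

theorem gapx0_computable {L : ℕ → ℕ} {Q : ℕ → List Bool → Bool} (hL : Computable L)
    (hQ : Computable₂ Q) : Computable (gapx0 L Q) :=
  dyad_computable.comp (cnt_computable hL hQ) (lev_computable hL)

theorem gapx_computable {L : ℕ → ℕ} {Q : ℕ → List Bool → Bool} (hL : Computable L)
    (hQ : Computable₂ Q) : Computable₂ (gapx L Q) := by
  have hJ : Computable fun p : ℕ × ℚ => p.2.den + 1 :=
    Computable.succ.comp (den_computable.comp Computable.snd)
  exact (gapx0_computable hL hQ).comp (Computable.pair Computable.fst hJ)

theorem schnorr_of_clopen (μ : Measure (ℕ → Bool)) (hμ : UniformMeasure μ) [IsProbabilityMeasure μ]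
    (L : ℕ → ℕ) (Q : ℕ → List Bool → Bool) (hL : Computable L) (hQ : Computable₂ Q)
    (hD : ∀ j, μ {ω | Q j (Pre ω (L j)) = true} ≤ (2 : ENNReal)⁻¹ ^ j) :
    SchnorrTest μ (tst L Q) := by
  have htail := tail_bound μ (fun j => {ω | Q j (Pre ω (L j)) = true}) hD
  simp only [Set.mem_ofPred_eq] at htail
  refine ⟨⟨tst_computable hL hQ, fun i => ?_⟩, gapx L Q, gapx_computable hL hQ, fun i ε hε => ?_⟩
  · rw [tst_open]
    refine (measure_union_le _ _).trans ?_
    rw [hμ, filler_length]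
    refine (add_le_add le_rfl (htail (i + 2))).trans ?_
    have h4 : (2 : ENNReal)⁻¹ ^ (i + 2) + 2 * (2 : ENNReal)⁻¹ ^ (i + 2)
        ≤ 4 * (2 : ENNReal)⁻¹ ^ (i + 2) := by
      calc _ = (1 + 2) * (2 : ENNReal)⁻¹ ^ (i + 2) := by ring
        _ ≤ _ := by gcongr; norm_num
    refine h4.trans (le_of_eq ?_)
    rw [pow_add, mul_left_comm]
    have : (4 : ENNReal) * 2⁻¹ ^ 2 = 1 := by
      rw [ENNReal.inv_pow.symm]
      norm_num
      exact ENNReal.mul_inv_cancel (by norm_num) (by norm_num)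
    rw [this, mul_one]
  · have hg : (gapx L Q i ε : ℝ) = (μ (Cyl (filler i) ∪
        {ω | ∃ j < ε.den + 1, i + 2 ≤ j ∧ Q j (Pre ω (L j)) = true})).toReal := by
      rw [← apx_set, measure_cnt μ hμ]; rfl
    rw [hg, tst_open]
    set A := Cyl (filler i) ∪
        {ω | ∃ j < ε.den + 1, i + 2 ≤ j ∧ Q j (Pre ω (L j)) = true} with hA
    set B := Cyl (filler i) ∪ {ω | ∃ j, i + 2 ≤ j ∧ Q j (Pre ω (L j)) = true} with hB
    have h1 : A ⊆ B := by
      rintro ω (h | ⟨j, _, h⟩)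
      · exact Or.inl h
      · exact Or.inr ⟨j, h⟩
    have h2 : B ⊆ A ∪ {ω | ∃ j, ε.den + 1 ≤ j ∧ Q j (Pre ω (L j)) = true} := by
      rintro ω (h | ⟨j, hj, h⟩)
      · exact Or.inl (Or.inl h)
      · by_cases hj' : j < ε.den + 1
        · exact Or.inl (Or.inr ⟨j, hj', hj, h⟩)
        · exact Or.inr ⟨j, not_lt.1 hj', h⟩
    have h3 : μ B ≤ μ A + 2 * (2 : ENNReal)⁻¹ ^ (ε.den + 1) :=
      (measure_mono h2).trans ((measure_union_le _ _).trans (add_le_add le_rfl (htail _)))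
    have h4 : (μ A).toReal ≤ (μ B).toReal :=
      ENNReal.toReal_mono (measure_ne_top _ _) (measure_mono h1)
    have hfin : (2 * (2 : ENNReal)⁻¹ ^ (ε.den + 1)) ≠ ⊤ :=
      ENNReal.mul_ne_top (by norm_num) (ENNReal.pow_ne_top (by norm_num))
    have h5 := ENNReal.toReal_mono (ENNReal.add_ne_top.2 ⟨measure_ne_top _ _, hfin⟩) h3
    rw [ENNReal.toReal_add (measure_ne_top _ _) hfin] at h5
    have h6 : (2 * (2 : ENNReal)⁻¹ ^ (ε.den + 1)).toReal ≤ (ε : ℝ) := by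
      have e1 : (2 * (2 : ENNReal)⁻¹ ^ (ε.den + 1)).toReal = 1 / 2 ^ ε.den := by
        simp [pow_succ]
        field_simp
      rw [e1]
      have hd : (0 : ℝ) < ε.den := by exact_mod_cast ε.den_pos
      have e2 : (1 : ℝ) / 2 ^ ε.den ≤ 1 / ε.den := by
        apply one_div_le_one_div_of_le hd
        exact_mod_cast (Nat.lt_two_pow_self).le
      refine e2.trans ?_
      rw [div_le_iff₀ hd]
      have e3 : (ε : ℝ) * ε.den = (ε.num : ℝ) := by exact_mod_cast Rat.mul_den_eq_num ε
      rw [e3]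
      have : 0 < ε.num := Rat.num_pos.2 hε
      exact_mod_cast this
    rw [abs_le]
    constructor <;> linarith

def eps (j : ℕ) : ℚ := dyad 1 j

theorem eps_computable : Computable eps :=
  dyad_computable.comp (Computable.const 1) Computable.id

theorem eps_val (j : ℕ) : (eps j : ℝ) = 1 / 2 ^ j := by
  simp [eps, dyad]

theorem eps_pos (j : ℕ) : 0 < eps j := by
  unfold eps dyad; positivity

def NN (m : ℚ → ℚ → ℕ) (j : ℕ) : ℕ := nsum (fun i => m (eps i) (eps i) + 1) (j + 1)

theorem NN_computable {m : ℚ → ℚ → ℕ} (hm : Computable₂ m) : Computable (NN m) := by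
  have h1 : Computable fun x : ℕ × ℕ => eps x.2 := eps_computable.comp Computable.snd
  have h2 := Computable.succ.comp (hm.comp h1 h1)
  exact nsum_computable (p := fun _ i => m (eps i) (eps i) + 1) h2 Computable.succ

theorem NN_succ (m : ℚ → ℚ → ℕ) (j : ℕ) :
    NN m (j + 1) = NN m j + (m (eps (j + 1)) (eps (j + 1)) + 1) := by
  simp [NN, nsum_eq, Finset.sum_range_succ]

theorem le_NN (m : ℚ → ℚ → ℕ) (j : ℕ) : m (eps j) (eps j) ≤ NN m j := by
  have := le_nsum (fun i => m (eps i) (eps i) + 1) (show j < j + 1 by omega)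
  unfold NN
  omega

theorem NN_ge (m : ℚ → ℚ → ℕ) (j : ℕ) : j ≤ NN m j := by
  induction j with
  | zero => simp
  | succ j ih => rw [NN_succ]; omega

def LL (N : ℕ → ℕ) (k : ℕ → ℚ → ℕ) (j : ℕ) : ℕ := nsum (fun n => k n (eps j)) (N (j + 1) + 1)

theorem LL_computable {N : ℕ → ℕ} {k : ℕ → ℚ → ℕ} (hN : Computable N) (hk : Computable₂ k) :
    Computable (LL N k) := by
  have h1 : Computable fun x : ℕ × ℕ => eps x.1 := eps_computable.comp Computable.fst
  have h2 := hk.comp Computable.snd h1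
  exact nsum_computable (p := fun j n => k n (eps j)) h2
    (Computable.succ.comp (hN.comp Computable.succ))

def HH (F : ℕ → List Bool → ℚ → ℚ) (k : ℕ → ℚ → ℕ) (j n : ℕ) (x : List Bool) : ℚ :=
  F n (x.take (k n (eps j))) (eps j)

theorem HH_computable {F : ℕ → List Bool → ℚ → ℚ} {k : ℕ → ℚ → ℕ}
    (hF : Computable (fun p : ℕ × List Bool × ℚ => F p.1 p.2.1 p.2.2)) (hk : Computable₂ k) :
    Computable fun p : (ℕ × ℕ) × List Bool => HH F k p.1.1 p.1.2 p.2 := by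
  have hj : Computable fun p : (ℕ × ℕ) × List Bool => p.1.1 := Computable.fst.comp Computable.fst
  have hn : Computable fun p : (ℕ × ℕ) × List Bool => p.1.2 := Computable.snd.comp Computable.fst
  have hx : Computable fun p : (ℕ × ℕ) × List Bool => p.2 := Computable.snd
  have he := eps_computable.comp hj
  have hkk := hk.comp hn he
  have ht := Primrec.list_take.to_comp.comp hkk hx
  have hB := Computable.pair hn (Computable.pair ht he)
  exact comp_of hF hB fun y => rfl

def QQ (N : ℕ → ℕ) (F : ℕ → List Bool → ℚ → ℚ) (k : ℕ → ℚ → ℕ) (j : ℕ) (x : List Bool) : Bool :=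
  bex (fun n => decide (N j ≤ n) && far j (HH F k j n x) (HH F k j (N j) x)) (N (j + 1) + 1)

theorem QQ_computable {N : ℕ → ℕ} {F : ℕ → List Bool → ℚ → ℚ} {k : ℕ → ℚ → ℕ}
    (hN : Computable N)
    (hF : Computable (fun p : ℕ × List Bool × ℚ => F p.1 p.2.1 p.2.2)) (hk : Computable₂ k) :
    Computable₂ (QQ N F k) := by
  have hH := HH_computable hF hk
  have hj : Computable fun y : (ℕ × List Bool) × ℕ => y.1.1 := Computable.fst.comp Computable.fst
  have hx : Computable fun y : (ℕ × List Bool) × ℕ => y.1.2 := Computable.snd.comp Computable.fst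
  have hn : Computable fun y : (ℕ × List Bool) × ℕ => y.2 := Computable.snd
  have hNj := hN.comp hj
  have le : Computable₂ fun x y : ℕ => decide (x ≤ y) := Primrec.nat_le.decide.to_comp
  have h1 := le.comp hNj hn
  have hB1 := Computable.pair (Computable.pair hj hn) hx
  have hB2 := Computable.pair (Computable.pair hj hNj) hx
  have h2 : Computable fun y : (ℕ × List Bool) × ℕ => HH F k y.1.1 y.2 y.1.2 :=
    comp_of hH hB1 fun y => rfl
  have h3 : Computable fun y : (ℕ × List Bool) × ℕ => HH F k y.1.1 (N y.1.1) y.1.2 :=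
    comp_of hH hB2 fun y => rfl
  have hB3 := Computable.pair hj (Computable.pair h2 h3)
  have h4 : Computable fun y : (ℕ × List Bool) × ℕ =>
      far y.1.1 (HH F k y.1.1 y.2 y.1.2) (HH F k y.1.1 (N y.1.1) y.1.2) :=
    comp_of far_computable hB3 fun y => rfl
  have h5 := Primrec.and.to_comp.comp h1 h4
  have hM : Computable fun y : ℕ × List Bool => N (y.1 + 1) + 1 :=
    Computable.succ.comp (hN.comp (Computable.succ.comp Computable.fst))
  exact bex_computable (p := fun (a : ℕ × List Bool) n => decide (N a.1 ≤ n) &&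
    far a.1 (HH F k a.1 n a.2) (HH F k a.1 (N a.1) a.2)) h5 hM

theorem QQ_iff {N : ℕ → ℕ} (hNm : ∀ j, N j ≤ N (j + 1)) (F : ℕ → List Bool → ℚ → ℚ)
    (k : ℕ → ℚ → ℕ) (j : ℕ) (ω : ℕ → Bool) :
    QQ N F k j (Pre ω (LL N k j)) = true ↔ ∃ n, N j ≤ n ∧ n ≤ N (j + 1) ∧
      (4 : ℝ) / 2 ^ j < |(F n (Pre ω (k n (eps j))) (eps j) : ℝ)
        - F (N j) (Pre ω (k (N j) (eps j))) (eps j)| := by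
  have key : ∀ n, n ≤ N (j + 1) →
      HH F k j n (Pre ω (LL N k j)) = F n (Pre ω (k n (eps j))) (eps j) := by
    intro n hn
    unfold HH
    rw [Pre_take]
    exact le_nsum (fun n => k n (eps j)) (Nat.lt_succ_of_le hn)
  unfold QQ
  rw [bex_iff]
  refine exists_congr fun n => ?_
  rw [Bool.and_eq_true, decide_eq_true_eq, far_iff]
  have cast : ∀ a b : ℚ, 4 / 2 ^ j < |a - b| ↔ (4 : ℝ) / 2 ^ j < |(a : ℝ) - b| := by
    intro a b
    rw [← Rat.cast_lt (K := ℝ)]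
    push_cast
    rfl
  constructor
  · rintro ⟨h1, h2, h3⟩
    have h1 := Nat.le_of_lt_succ h1
    rw [key n h1, key _ (hNm j)] at h3
    exact ⟨h2, h1, (cast _ _).1 h3⟩
  · rintro ⟨h2, h1, h3⟩
    refine ⟨Nat.lt_succ_of_le h1, h2, ?_⟩
    rw [key n h1, key _ (hNm j)]
    exact (cast _ _).2 h3

theorem tendsto_of_blocks (u : ℕ → ℝ) (N : ℕ → ℕ) (hNs : ∀ j, N j < N (j + 1)) (i : ℕ)
    (h : ∀ j, i ≤ j → ∀ n, N j ≤ n → n ≤ N (j + 1) → |u n - u (N j)| ≤ 6 / 2 ^ j) :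
    ∃ L : ℝ, Tendsto u atTop (nhds L) := by
  have hmono : StrictMono N := strictMono_nat_of_lt_succ hNs
  have h1 : ∀ j, i ≤ j → ∀ d, |u (N (j + d)) - u (N j)| ≤ 12 / 2 ^ j - 12 / 2 ^ (j + d) := by
    intro j hj d
    induction d with
    | zero => simp
    | succ d ih =>
      have h2 := h (j + d) (by omega) (N (j + d + 1)) (hNs _).le le_rfl
      have h3 := abs_sub_le (u (N (j + d + 1))) (u (N (j + d))) (u (N j))
      have h4 : (12 : ℝ) / 2 ^ (j + (d + 1)) = 6 / 2 ^ (j + d) := by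
        rw [← add_assoc, pow_succ]; field_simp; norm_num
      have h5 : (12 : ℝ) / 2 ^ (j + d) = 6 / 2 ^ (j + d) + 6 / 2 ^ (j + d) := by ring
      rw [h4, ← add_assoc]
      linarith
  have h2 : ∀ j, i ≤ j → ∀ n, N j ≤ n → |u n - u (N j)| ≤ 12 / 2 ^ j := by
    intro j hj n hn
    have hex : ∃ d, n ≤ N (j + d) := ⟨n, (Nat.le_add_left n j).trans (hmono.id_le _)⟩
    classical
    obtain ⟨d, hd⟩ : ∃ d, N (j + d) ≤ n ∧ n ≤ N (j + d + 1) := by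
      by_contra hcon
      push Not at hcon
      have : ∀ d, N (j + d) ≤ n := by
        intro d
        induction d with
        | zero => exact hn
        | succ d ih => exact (hcon d ih).le
      have h6 := this (n + 1)
      have h7 : j + (n + 1) ≤ N (j + (n + 1)) := hmono.id_le _
      omega
    have h3 := h (j + d) (by omega) n hd.1 hd.2
    have h4 := h1 j hj d
    have h5 := abs_sub_le (u n) (u (N (j + d))) (u (N j))
    have h6 : (12 : ℝ) / 2 ^ (j + d) = 6 / 2 ^ (j + d) + 6 / 2 ^ (j + d) := by ring
    have h7 : (0 : ℝ) ≤ 6 / 2 ^ (j + d) := by positivity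
    linarith
  refine cauchySeq_tendsto_of_complete (Metric.cauchySeq_iff'.2 fun ε hε => ?_)
  obtain ⟨j, hj⟩ := exists_pow_lt_of_lt_one (show 0 < ε / 12 by positivity)
    (show (1 / 2 : ℝ) < 1 by norm_num)
  refine ⟨N (i + j), fun n hn => ?_⟩
  rw [Real.dist_eq]
  have h3 := h2 (i + j) (by omega) n hn
  have h4 : (12 : ℝ) / 2 ^ (i + j) ≤ 12 * (1 / 2) ^ j := by
    rw [one_div, inv_pow, div_eq_mul_inv]
    gcongr
    · norm_num
    · omega
  linarith

/-- if a computable sequence of functions converges effectively almost surely,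
then there is a Schnorr test `t` such that `lim f n ω` exists for every `ω` passing `t`;
in particular the limit exists for every Schnorr random sequence. -/
theorem schnorr_test_for_effective_as_convergence
    (μ : Measure (ℕ → Bool)) (hμ : UniformMeasure μ) [IsProbabilityMeasure μ]
    (f : ℕ → (ℕ → Bool) → ℝ) (g : (ℕ → Bool) → ℝ)
    (hf : ComputableRealFnSeq f) (hconv : EffConvergesAS μ f g) :
    (∃ t : ℕ → ℕ → List Bool, SchnorrTest μ t ∧
      ∀ ω : ℕ → Bool, (∃ n, ω ∉ EffOpen t n) →
        ∃ L : ℝ, Tendsto (fun n => f n ω) atTop (nhds L)) ∧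
    ∀ ω : ℕ → Bool, SchnorrRandom μ ω →
      ∃ L : ℝ, Tendsto (fun n => f n ω) atTop (nhds L) := by
  obtain ⟨F, k, hF, hk, hFk⟩ := hf
  obtain ⟨m, hm, hmm⟩ := hconv
  have hNs : ∀ j, NN m j < NN m (j + 1) := fun j => by rw [NN_succ]; omega
  have hN := NN_computable hm
  have hiff := QQ_iff (fun j => (hNs j).le) F k
  have hap : ∀ j n ω, |(F n (Pre ω (k n (eps j))) (eps j) : ℝ) - f n ω| ≤ 1 / 2 ^ j := by
    intro j n ω
    have := hFk n ω (eps j) (eps_pos j)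
    rwa [eps_val] at this
  have htest : SchnorrTest μ (tst (LL (NN m) k) (QQ (NN m) F k)) := by
    refine schnorr_of_clopen μ hμ _ _ (LL_computable hN hk) (QQ_computable hN hF hk) fun j => ?_
    have h1 := (hmm (eps j) (eps j) (eps_pos j) (eps_pos j)).le
    have h2 : ENNReal.ofReal (eps j : ℝ) = (2 : ENNReal)⁻¹ ^ j := by
      rw [eps_val, one_div, ← inv_pow, ENNReal.ofReal_pow (by norm_num),
        ENNReal.ofReal_inv_of_pos (by norm_num)]
      simp
    rw [h2] at h1
    refine (measure_mono ?_).trans h1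
    intro ω hω
    obtain ⟨n, hn1, hn2, hn3⟩ := (hiff j ω).1 hω
    have hle := le_NN m j
    by_contra hcon
    have hc : ∀ n, m (eps j) (eps j) ≤ n → |f n ω - g ω| ≤ 1 / 2 ^ j := by
      intro n hn
      by_contra hlt
      refine hcon ⟨n, hn, ?_⟩
      rw [eps_val]
      exact not_le.1 hlt
    have e1 := abs_le.1 (hc n (hle.trans hn1))
    have e2 := abs_le.1 (hc _ hle)
    have e3 := abs_le.1 (hap j n ω)
    have e4 := abs_le.1 (hap j (NN m j) ω)
    have e5 : (4 : ℝ) / 2 ^ j = 4 * (1 / 2 ^ j) := by ring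
    rw [e5] at hn3
    refine absurd hn3 (not_lt.2 (abs_le.2 ⟨?_, ?_⟩))
    · linarith [e1.1, e1.2, e2.1, e2.2, e3.1, e3.2, e4.1, e4.2]
    · linarith [e1.1, e1.2, e2.1, e2.2, e3.1, e3.2, e4.1, e4.2]
  have hlim : ∀ ω : ℕ → Bool, (∃ n, ω ∉ EffOpen (tst (LL (NN m) k) (QQ (NN m) F k)) n) →
      ∃ L : ℝ, Tendsto (fun n => f n ω) atTop (nhds L) := by
    rintro ω ⟨i, hi⟩
    rw [tst_open] at hi
    refine tendsto_of_blocks (fun n => f n ω) (NN m) hNs (i + 2) fun j hj n hn1 hn2 => ?_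
    have hq : ¬ (QQ (NN m) F k j (Pre ω (LL (NN m) k j)) = true) :=
      fun hq => hi (Or.inr ⟨j, hj, hq⟩)
    rw [hiff j ω] at hq
    have e5 : (4 : ℝ) / 2 ^ j = 4 * (1 / 2 ^ j) := by ring
    have e6 : (6 : ℝ) / 2 ^ j = 6 * (1 / 2 ^ j) := by ring
    have e1 := abs_le.1 (not_lt.1 fun h => hq ⟨n, hn1, hn2, h⟩)
    have e3 := abs_le.1 (hap j n ω)
    have e4 := abs_le.1 (hap j (NN m j) ω)
    rw [e5] at e1
    rw [e6]
    refine abs_le.2 ⟨?_, ?_⟩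
    · linarith [e1.1, e1.2, e3.1, e3.2, e4.1, e4.2]
    · linarith [e1.1, e1.2, e3.1, e3.2, e4.1, e4.2]
  exact ⟨⟨_, htest, hlim⟩, fun ω hω => hlim ω (hω _ htest)⟩
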